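/- For every k ≥ 1, every x ∈ S^k with x_0 < 1, and every v ∈ ℝ^{k+1} with ⟨v, x⟩ = 0, the vectors b_1(x), ..., b_k(x) form a basis of the tangent space at x in the sense that v = Σ_{i=1}^k ⟨v, b_i(x)⟩ b_i(x); in particular ‖v‖₂² = Σ_{i=1}^k ⟨v, b_i(x)⟩². -/

import Mathlib

open Finset

noncomputable section

/-- The ℓ₂-norm on `ℝⁿ`. -/
def l2 {n : ℕ} (x : Fin n → ℝ) : ℝ := Real.sqrt (∑ i, x i ^ 2)

/-- The standard inner product on `ℝⁿ`. -/
def dotp {n : ℕ} (x y : Fin n → ℝ) : ℝ := ∑ i, x i * y i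

/-- The unit sphere `S^k` in `ℝ^{k+1}`. -/
def unitSphere (k : ℕ) : Set (Fin (k + 1) → ℝ) := {x | l2 x = 1}

/-- The tangent vector `b_i(x)`: `[b_i(x)]₀ = x_i`,
`[b_i(x)]_i = 1 − x_i² / (1 − x₀)`, and `[b_i(x)]_j = −x_j x_i / (1 − x₀)` otherwise. -/
def tb {k : ℕ} (x : Fin (k + 1) → ℝ) (i : Fin k) : Fin (k + 1) → ℝ := fun j =>
  if j = 0 then x i.succ
  else if j = i.succ then 1 - (x i.succ) ^ 2 / (1 - x 0)
  else -(x j) * x i.succ / (1 - x 0)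

/-! The Householder reflection in the hyperplane orthogonal to `e₀ - x` exchanges the unit vectors
`e₀` and `x`, and it sends the other standard basis vectors `e₁, …, e_k` to `b_1(x), …, b_k(x)`.
Hence `x, b_1(x), …, b_k(x)` is an orthonormal basis of `ℝ^{k+1}`; for `v` orthogonal to `x`, the
first term of the expansion of `v` in this basis and of Parseval's identity vanishes. -/

open WithLp
open scoped InnerProductSpace

-- For `v = w` the denominator is `0`, but so is the vector `v - w`.
theorem reflection_orthogonal_sub_apply {E : Type*} [NormedAddCommGroup E] [InnerProductSpace ℝ E]
    {v w : E} (h : ‖v‖ = ‖w‖) (y : E) :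
    (ℝ ∙ (v - w))ᗮ.reflection y = y - (⟪v - w, y⟫_ℝ / (‖v‖ ^ 2 - ⟪v, w⟫_ℝ)) • (v - w) := by
  have norm_sq_sub : ‖v - w‖ ^ 2 = 2 * (‖v‖ ^ 2 - ⟪v, w⟫_ℝ) := by
    rw [norm_sub_sq_real, ← h]
    ring
  rw [Submodule.reflection_orthogonal_apply, Submodule.reflection_singleton_apply,
    RCLike.ofReal_real_eq_id, id, norm_sq_sub, neg_sub, ← Nat.cast_smul_eq_nsmul ℝ, smul_smul,
    Nat.cast_ofNat, ← mul_div_assoc, mul_div_mul_left _ _ two_ne_zero]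

section OrthonormalBasis

variable {𝕜 E : Type*} [RCLike 𝕜] [NormedAddCommGroup E] [InnerProductSpace 𝕜 E] {n : ℕ}
  (b : OrthonormalBasis (Fin (n + 1)) 𝕜 E) {p : Fin (n + 1)} {v : E}

theorem eq_sum_succAbove_of_inner_eq_zero (hv : ⟪b p, v⟫_𝕜 = 0) :
    v = ∑ i : Fin n, ⟪b (p.succAbove i), v⟫_𝕜 • b (p.succAbove i) := by
  simpa only [Fin.sum_univ_succAbove _ p, hv, zero_smul, zero_add] using (b.sum_repr' v).symm

theorem norm_sq_eq_sum_succAbove_of_inner_eq_zero (hv : ⟪b p, v⟫_𝕜 = 0) :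
    ‖v‖ ^ 2 = ∑ i : Fin n, ‖⟪b (p.succAbove i), v⟫_𝕜‖ ^ 2 := by
  simpa [Fin.sum_univ_succAbove _ p, hv] using (b.sum_sq_norm_inner_right v).symm

end OrthonormalBasis

theorem l2_eq_norm_toLp {n : ℕ} (x : Fin n → ℝ) : l2 x = ‖toLp 2 x‖ := by
  simp [l2, EuclideanSpace.norm_eq]

theorem dotp_eq_inner_toLp {n : ℕ} (x y : Fin n → ℝ) : dotp x y = ⟪toLp 2 y, toLp 2 x⟫_ℝ :=
  rfl

section SphereFrame

variable {k : ℕ} {x : Fin (k + 1) → ℝ}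

theorem norm_toLp_of_mem_unitSphere (hx : x ∈ unitSphere k) : ‖toLp 2 x‖ = 1 :=
  (l2_eq_norm_toLp x).symm.trans hx

/-- The orthonormal basis of `ℝ^{k+1}` obtained by reflecting the standard basis in the hyperplane
orthogonal to `e₀ - x`. For `x ≠ e₀` on the unit sphere it consists of `x` and the vectors
`tb x i`. For `x = e₀` the orthogonal complement is the whole space and the basis is the standard
one. -/
def sphereFrame (x : Fin (k + 1) → ℝ) :
    OrthonormalBasis (Fin (k + 1)) ℝ (EuclideanSpace ℝ (Fin (k + 1))) :=
  (EuclideanSpace.basisFun (Fin (k + 1)) ℝ).map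
    (ℝ ∙ (EuclideanSpace.single 0 1 - toLp 2 x))ᗮ.reflection

theorem sphereFrame_apply (x : Fin (k + 1) → ℝ) (j : Fin (k + 1)) :
    sphereFrame x j =
      (ℝ ∙ (EuclideanSpace.single 0 1 - toLp 2 x))ᗮ.reflection (EuclideanSpace.single j 1) := by
  rw [sphereFrame, OrthonormalBasis.map_apply, EuclideanSpace.basisFun_apply]

theorem norm_single_zero_eq_norm_toLp (hx : x ∈ unitSphere k) :
    ‖(EuclideanSpace.single 0 1 : EuclideanSpace ℝ (Fin (k + 1)))‖ = ‖toLp 2 x‖ := by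
  rw [PiLp.norm_single, norm_one, norm_toLp_of_mem_unitSphere hx]

theorem sphereFrame_zero (hx : x ∈ unitSphere k) : sphereFrame x 0 = toLp 2 x := by
  rw [sphereFrame_apply, Submodule.reflection_sub (norm_single_zero_eq_norm_toLp hx)]

theorem toLp_tb (hx0 : x 0 ≠ 1) (i : Fin k) :
    toLp 2 (tb x i) = EuclideanSpace.single i.succ 1 +
      (x i.succ / (1 - x 0)) • (EuclideanSpace.single 0 1 - toLp 2 x) := by
  have one_sub_ne_zero : 1 - x 0 ≠ 0 := sub_ne_zero.mpr hx0.symm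
  ext j
  rcases eq_or_ne j 0 with rfl | hj0
  · simp [tb, one_sub_ne_zero]
  rcases eq_or_ne j i.succ with rfl | hji
  · simp only [tb, Fin.succ_ne_zero, ↓reduceIte, PiLp.add_apply, PiLp.single_eq_same,
      PiLp.smul_apply, PiLp.sub_apply, ne_eq, not_false_eq_true, PiLp.single_eq_of_ne, smul_eq_mul]
    ring
  · simp only [tb, hj0, hji, ↓reduceIte, PiLp.add_apply, ne_eq, not_false_eq_true,
      PiLp.single_eq_of_ne, PiLp.smul_apply, PiLp.sub_apply, smul_eq_mul]
    ring

theorem sphereFrame_succ (hx : x ∈ unitSphere k) (hx0 : x 0 ≠ 1) (i : Fin k) :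
    sphereFrame x i.succ = toLp 2 (tb x i) := by
  rw [sphereFrame_apply, reflection_orthogonal_sub_apply (norm_single_zero_eq_norm_toLp hx),
    toLp_tb hx0]
  simp [inner_sub_left, EuclideanSpace.inner_single_left, EuclideanSpace.inner_single_right,
    neg_div]

end SphereFrame

/-- For `x ∈ S^k` with `x₀ < 1`, the vectors `b_1(x), …, b_k(x)` form a basis of the
tangent space at `x`: every tangent vector `v` satisfies `v = Σᵢ ⟨v, bᵢ(x)⟩ bᵢ(x)`,
and in particular `‖v‖₂² = Σᵢ ⟨v, bᵢ(x)⟩²`. -/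
theorem tangent_basis_span (k : ℕ) (hk : 1 ≤ k)
    (x : Fin (k + 1) → ℝ) (hx : x ∈ unitSphere k) (hx0 : x 0 < 1)
    (v : Fin (k + 1) → ℝ) (hv : dotp v x = 0) :
    v = ∑ i : Fin k, dotp v (tb x i) • tb x i ∧
    (∑ j, v j ^ 2) = ∑ i : Fin k, dotp v (tb x i) ^ 2 := by
  have inner_zero : ⟪sphereFrame x 0, toLp 2 v⟫_ℝ = 0 := by
    rw [sphereFrame_zero hx, ← dotp_eq_inner_toLp, hv]
  have expansion := eq_sum_succAbove_of_inner_eq_zero (sphereFrame x) inner_zero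
  have parseval := norm_sq_eq_sum_succAbove_of_inner_eq_zero (sphereFrame x) inner_zero
  simp only [Fin.zero_succAbove, sphereFrame_succ hx hx0.ne, ← dotp_eq_inner_toLp]
    at expansion parseval
  constructor
  · simpa only [ofLp_sum, ofLp_smul] using congrArg ofLp expansion
  · simpa only [EuclideanSpace.real_norm_sq_eq, Real.norm_eq_abs, sq_abs] using parseval

end
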